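/- Let P be a b-bounded and uniform AC-MAS over an infinite interpretation domain U with adom(s0) ⊆ C, let φ be an FO-CTLK formula, and let U' be an interpretation domain with C ⊆ U' and |U'| ≥ 2b + |C| + max{|vars(φ)|, N_Ag}. Then for any ⊕-abstraction P' of P over U', P ⊨ φ if and only if P' ⊨ φ. -/

import Mathlib

/-!  Common formalisation of artifact-centric multi-agent systems (AC-MAS). -/

open Set

/-- A database schema: a finite type of relation symbols, each with an arity. -/
structure Schema : Type 1 where
  Rel : Type
  [relFin : Fintype Rel]
  arity : Rel → ℕ

attribute [instance] Schema.relFin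

/-- A `D`-instance over an interpretation domain `U`: every relation symbol is
interpreted as a finite set of tuples over `U`. -/
structure Inst (D : Schema) (U : Type) : Type where
  rel : ∀ r : D.Rel, Set (Fin (D.arity r) → U)
  finite : ∀ r, (rel r).Finite

/-- The active domain of an instance. -/
def Inst.adom {D : Schema} {U : Type} (I : Inst D U) : Set U :=
  { u | ∃ (r : D.Rel) (t : Fin (D.arity r) → U), t ∈ I.rel r ∧ ∃ j, t j = u }

/-- The schema `D` together with a primed copy of every relation symbol. -/
def Schema.double (D : Schema) : Schema where
  Rel := D.Rel ⊕ D.Rel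
  relFin := inferInstance
  arity := Sum.elim D.arity D.arity

/-- The disjunctive join `I ⊕ J`: unprimed symbols are interpreted as in `I`,
primed symbols as in `J`. -/
def Inst.oplus {D : Schema} {U : Type} (I J : Inst D U) : Inst D.double U where
  rel := fun r => match r with
    | .inl r₀ => I.rel r₀
    | .inr r₀ => J.rel r₀
  finite := fun r => by
    cases r with
    | inl r₀ => exact I.finite r₀
    | inr r₀ => exact J.finite r₀

/-- Image of an instance under a map of domains. -/
def Inst.map {D : Schema} {C U : Type} (f : C → U) (I : Inst D C) : Inst D U where
  rel := fun r => (fun t => f ∘ t) '' I.rel r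
  finite := fun r => (I.finite r).image _

/-! ### First-order formulas -/

/-- Terms: variables (natural numbers) or constants from `C`. -/
abbrev Term (C : Type) := ℕ ⊕ C

def Term.varsF {C : Type} : Term C → Finset ℕ
  | .inl x => {x}
  | .inr _ => ∅

def Term.constsS {C : Type} : Term C → Set C
  | .inl _ => ∅
  | .inr c => {c}

def Term.val {C U : Type} (cst : C → U) (σ : ℕ → U) : Term C → U
  | .inl x => σ x
  | .inr c => cst c

/-- First-order formulas over schema `D`, with equality, constants from `C`
and no function symbols. -/
inductive FO (D : Schema) (C : Type) : Type where
  | eq : Term C → Term C → FO D C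
  | rel : (r : D.Rel) → (Fin (D.arity r) → Term C) → FO D C
  | not : FO D C → FO D C
  | imp : FO D C → FO D C → FO D C
  | all : ℕ → FO D C → FO D C

namespace FO

variable {D : Schema} {C : Type}

/-- Free variables. -/
def free : FO D C → Finset ℕ
  | .eq t₁ t₂ => t₁.varsF ∪ t₂.varsF
  | .rel _ ts => Finset.univ.biUnion fun j => (ts j).varsF
  | .not φ => φ.free
  | .imp φ ψ => φ.free ∪ ψ.free
  | .all x φ => φ.free.erase x

/-- All variables. -/
def vars : FO D C → Finset ℕ
  | .eq t₁ t₂ => t₁.varsF ∪ t₂.varsF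
  | .rel _ ts => Finset.univ.biUnion fun j => (ts j).varsF
  | .not φ => φ.vars
  | .imp φ ψ => φ.vars ∪ ψ.vars
  | .all x φ => insert x φ.vars

/-- Constants mentioned in a formula. -/
def consts : FO D C → Set C
  | .eq t₁ t₂ => t₁.constsS ∪ t₂.constsS
  | .rel _ ts => ⋃ j, (ts j).constsS
  | .not φ => φ.consts
  | .imp φ ψ => φ.consts ∪ ψ.consts
  | .all _ φ => φ.consts

/-- The formula mentions only relation symbols from `R`. -/
def UsesOnly (R : Set D.Rel) : FO D C → Prop
  | .eq _ _ => True
  | .rel r _ => r ∈ R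
  | .not φ => φ.UsesOnly R
  | .imp φ ψ => φ.UsesOnly R ∧ ψ.UsesOnly R
  | .all _ φ => φ.UsesOnly R

/-- Satisfaction of FO-formulas, with active-domain quantification. -/
def sat {U : Type} (cst : C → U) (I : Inst D U) : (ℕ → U) → FO D C → Prop
  | σ, .eq t₁ t₂ => t₁.val cst σ = t₂.val cst σ
  | σ, .rel r ts => (fun j => (ts j).val cst σ) ∈ I.rel r
  | σ, .not φ => ¬ sat cst I σ φ
  | σ, .imp φ ψ => sat cst I σ φ → sat cst I σ ψ
  | σ, .all x φ => ∀ u ∈ I.adom, sat cst I (Function.update σ x u) φ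

end FO

/-! ### Agents and AC-MAS -/

/-- The signature of an agent: a finite set of action types with parameter counts. -/
structure AgentSig : Type 1 where
  Act : Type
  [actFin : Fintype Act]
  np : Act → ℕ

attribute [instance] AgentSig.actFin

/-- A ground action: an action type together with ground parameters. -/
def GAct (g : AgentSig) (U : Type) : Type := Σ a : g.Act, Fin (g.np a) → U

/-- Renaming of ground-action parameters. -/
def GAct.map {g : AgentSig} {U U' : Type} (f : U → U') : GAct g U → GAct g U'
  | ⟨a, u⟩ => ⟨a, fun j => f (u j)⟩

/-- An agent: local states structured as database instances, and a protocol. -/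
structure Agent (D : Schema) (g : AgentSig) (U : Type) : Type where
  L : Set (Inst D U)
  Pr : Inst D U → Set (GAct g U)

/-- A global state: one local database instance per agent `0, …, n`
(agent `0` is the environment). -/
abbrev GState (D : Schema) (n : ℕ) (U : Type) := Fin (n+1) → Inst D U

/-- A joint (global) ground action. -/
abbrev JAct {n : ℕ} (sig : Fin (n+1) → AgentSig) (U : Type) : Type := ∀ i, GAct (sig i) U

def JAct.map {n : ℕ} {sig : Fin (n+1) → AgentSig} {U U' : Type} (f : U → U')
    (a : JAct sig U) : JAct sig U' := fun i => (a i).map f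

/-- The set of individuals occurring as parameters of a joint ground action. -/
def actElems {n : ℕ} {sig : Fin (n+1) → AgentSig} {U : Type} (a : JAct sig U) : Set U :=
  { u | ∃ (i : Fin (n+1)) (j : Fin ((sig i).np (a i).1)), (a i).2 j = u }

/-- Active domain of a family of instances (e.g. a global state). -/
def adomF {D : Schema} {X U : Type} (s : X → Inst D U) : Set U := ⋃ i, (s i).adom

/-- The global instance `D_s` associated with a global state. -/
def gInst {D : Schema} {n : ℕ} {U : Type} (s : GState D n U) : Inst D U where
  rel := fun r => ⋃ i, (s i).rel r
  finite := fun r => Set.finite_iUnion fun i => (s i).finite r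

/-- Componentwise disjunctive join of two global states. -/
def oplusG {D : Schema} {n : ℕ} {U : Type} (s t : GState D n U) : GState D.double n U :=
  fun i => (s i).oplus (t i)

/-- An artifact-centric multi-agent system. -/
structure ACMAS (D : Schema) {n : ℕ} (sig : Fin (n+1) → AgentSig) {U : Type}
    (Ag : ∀ i, Agent D (sig i) U) : Type where
  /-- set of (reachable) global states -/
  S : Set (GState D n U)
  /-- initial global state -/
  s0 : GState D n U
  s0_mem : s0 ∈ S
  states_local : ∀ s ∈ S, ∀ i, s i ∈ (Ag i).L
  /-- global transition function -/
  τ : GState D n U → JAct sig U → Set (GState D n U)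
  /-- `τ` is defined only on protocol-enabled joint actions -/
  tau_enabled : ∀ s a, (τ s a).Nonempty → ∀ i, a i ∈ (Ag i).Pr (s i)
  tau_closed : ∀ s ∈ S, ∀ a, τ s a ⊆ S

namespace ACMAS

variable {D : Schema} {n : ℕ} {sig : Fin (n+1) → AgentSig} {U : Type}
  {Ag : ∀ i, Agent D (sig i) U}

/-- The transition relation `s → t`. -/
def Tr (M : ACMAS D sig Ag) (s t : GState D n U) : Prop := ∃ a, t ∈ M.τ s a

/-- Epistemic indistinguishability for agent `i`. -/
def Epi (M : ACMAS D sig Ag) (i : Fin (n+1)) (s t : GState D n U) : Prop :=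
  s ∈ M.S ∧ t ∈ M.S ∧ s i = t i

/-- Union of the epistemic relations of agents `1, …, n`. -/
def EpiAny (M : ACMAS D sig Ag) (s t : GState D n U) : Prop :=
  ∃ i : Fin n, M.Epi i.succ s t

/-- The standard assumptions: the transition relation is serial and `S` is
exactly the set of states reachable from `s0`. -/
def Std (M : ACMAS D sig Ag) : Prop :=
  (∀ s ∈ M.S, ∃ t, M.Tr s t) ∧ M.S = { s | Relation.ReflTransGen M.Tr M.s0 s }

/-- An (infinite) run. -/
def IsRun (M : ACMAS D sig Ag) (r : ℕ → GState D n U) : Prop :=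
  (∀ k, r k ∈ M.S) ∧ ∀ k, M.Tr (r k) (r (k+1))

/-- A temporal-epistemic run. -/
def IsTERun (M : ACMAS D sig Ag) (r : ℕ → GState D n U) : Prop :=
  (∀ k, r k ∈ M.S) ∧ ∀ k, M.Tr (r k) (r (k+1)) ∨ M.EpiAny (r k) (r (k+1))

end ACMAS

/-! ### Isomorphisms and equivalent assignments -/

/-- `ι` is a witness for the isomorphism of the families `s` and `s'`:
a constant-preserving bijection between the active domains extended with the
constants, preserving all relations componentwise. -/
def IsWitness {D : Schema} {X C U U' : Type} (cst : C → U) (cst' : C → U')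
    (ι : U → U') (s : X → Inst D U) (s' : X → Inst D U') : Prop :=
  Set.BijOn ι (adomF s ∪ Set.range cst) (adomF s' ∪ Set.range cst') ∧
  (∀ c, ι (cst c) = cst' c) ∧
  ∀ (i : X) (r : D.Rel) (t : Fin (D.arity r) → U),
    (∀ j, t j ∈ adomF s ∪ Set.range cst) →
    (t ∈ (s i).rel r ↔ (fun j => ι (t j)) ∈ (s' i).rel r)

/-- Isomorphism of families of instances (in particular global states). -/
def Iso {D : Schema} {X C U U' : Type} (cst : C → U) (cst' : C → U')
    (s : X → Inst D U) (s' : X → Inst D U') : Prop :=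
  ∃ ι, IsWitness cst cst' ι s s'

/-- Equivalent assignments for a set `V` of variables w.r.t. `s` and `s'`. -/
def EqAssign {D : Schema} {n : ℕ} {C U U' : Type} (cst : C → U) (cst' : C → U')
    (V : Set ℕ) (σ : ℕ → U) (σ' : ℕ → U')
    (s : GState D n U) (s' : GState D n U') : Prop :=
  ∃ γ : U → U',
    Set.BijOn γ (adomF s ∪ Set.range cst ∪ σ '' V)
      (adomF s' ∪ Set.range cst' ∪ σ' '' V) ∧
    IsWitness cst cst' γ s s' ∧
    ∀ x ∈ V, σ' x = γ (σ x)

/-! ### Simulations and bisimulations -/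

section Bisim

variable {D : Schema} {n : ℕ} {sig sig' : Fin (n+1) → AgentSig} {C U U' : Type}
  {Ag : ∀ i, Agent D (sig i) U} {Ag' : ∀ i, Agent D (sig' i) U'}

/-- Simulation between two AC-MAS. -/
def IsSim (cst : C → U) (cst' : C → U')
    (M : ACMAS D sig Ag) (M' : ACMAS D sig' Ag')
    (R : GState D n U → GState D n U' → Prop) : Prop :=
  ∀ s s', R s s' →
    s ∈ M.S ∧ s' ∈ M'.S ∧ Iso cst cst' s s' ∧
    ∀ t, M.Tr s t → ∃ t', M'.Tr s' t' ∧ R t t'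

/-- Bisimulation. -/
def IsBisim (cst : C → U) (cst' : C → U')
    (M : ACMAS D sig Ag) (M' : ACMAS D sig' Ag')
    (R : GState D n U → GState D n U' → Prop) : Prop :=
  IsSim cst cst' M M' R ∧ IsSim cst' cst M' M (fun s' s => R s s')

/-- Bisimilarity of states. -/
def Bisimilar (cst : C → U) (cst' : C → U')
    (M : ACMAS D sig Ag) (M' : ACMAS D sig' Ag')
    (s : GState D n U) (s' : GState D n U') : Prop :=
  ∃ R, IsBisim cst cst' M M' R ∧ R s s'

/-- `P ≈ P'`: the two systems are bisimilar. -/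
def BisimSys (cst : C → U) (cst' : C → U')
    (M : ACMAS D sig Ag) (M' : ACMAS D sig' Ag') : Prop :=
  Bisimilar cst cst' M M' M.s0 M'.s0

/-- ⊕-simulation. -/
def IsOSim (cst : C → U) (cst' : C → U')
    (M : ACMAS D sig Ag) (M' : ACMAS D sig' Ag')
    (R : GState D n U → GState D n U' → Prop) : Prop :=
  ∀ s s', R s s' →
    s ∈ M.S ∧ s' ∈ M'.S ∧ Iso cst cst' s s' ∧
    (∀ t, M.Tr s t → ∃ t', M'.Tr s' t' ∧
        Iso cst cst' (oplusG s t) (oplusG s' t') ∧ R t t') ∧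
    (∀ (t : GState D n U) (i : Fin n), M.Epi i.succ s t →
        ∃ t', M'.Epi i.succ s' t' ∧
          Iso cst cst' (oplusG s t) (oplusG s' t') ∧ R t t')

/-- ⊕-bisimulation. -/
def IsOBisim (cst : C → U) (cst' : C → U')
    (M : ACMAS D sig Ag) (M' : ACMAS D sig' Ag')
    (R : GState D n U → GState D n U' → Prop) : Prop :=
  IsOSim cst cst' M M' R ∧ IsOSim cst' cst M' M (fun s' s => R s s')

/-- ⊕-bisimilarity of states. -/
def OBisimilar (cst : C → U) (cst' : C → U')
    (M : ACMAS D sig Ag) (M' : ACMAS D sig' Ag')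
    (s : GState D n U) (s' : GState D n U') : Prop :=
  ∃ R, IsOBisim cst cst' M M' R ∧ R s s'

/-- The two systems are ⊕-bisimilar. -/
def OBisimSys (cst : C → U) (cst' : C → U')
    (M : ACMAS D sig Ag) (M' : ACMAS D sig' Ag') : Prop :=
  OBisimilar cst cst' M M' M.s0 M'.s0

end Bisim

/-! ### Uniformity and boundedness -/

section Uniform

variable {D : Schema} {n : ℕ} {sig : Fin (n+1) → AgentSig} {C U : Type}
  {Ag : ∀ i, Agent D (sig i) U}

/-- Temporal condition (1) of uniformity. -/
def UniformT (cst : C → U) (M : ACMAS D sig Ag) : Prop :=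
  ∀ s ∈ M.S, ∀ t ∈ M.S, ∀ s' ∈ M.S, ∀ (t' : GState D n U) (a : JAct sig U),
    t ∈ M.τ s a →
    ∀ ι : U → U, IsWitness cst cst ι (oplusG s t) (oplusG s' t') →
    ∀ ι' : U → U,
      (∀ u ∈ adomF (oplusG s t) ∪ Set.range cst, ι' u = ι u) →
      Set.InjOn ι' (adomF (oplusG s t) ∪ Set.range cst ∪ actElems a) →
      (∀ c, ι' (cst c) = cst c) →
      t' ∈ M.τ s' (JAct.map ι' a)

/-- Epistemic condition (2) of uniformity. -/
def UniformE (cst : C → U) (M : ACMAS D sig Ag) : Prop :=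
  ∀ s ∈ M.S, ∀ t ∈ M.S, ∀ s' ∈ M.S, ∀ (t' : GState D n U) (i : Fin n),
    M.Epi i.succ s t → Iso cst cst (oplusG s t) (oplusG s' t') →
    M.Epi i.succ s' t'

/-- Uniform AC-MAS. -/
def Uniform (cst : C → U) (M : ACMAS D sig Ag) : Prop :=
  UniformT cst M ∧ UniformE cst M

/-- `b`-bounded AC-MAS: no reachable state has more than `b` distinct elements
in its active domain. -/
def BBounded (M : ACMAS D sig Ag) (b : ℕ) : Prop :=
  ∀ s ∈ M.S, (adomF s).Finite ∧ (adomF s).ncard ≤ b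

end Uniform

/-- `N_Ag`: the sum over the agents of the maximal number of parameters of
their action types. -/
def NAg {n : ℕ} (sig : Fin (n+1) → AgentSig) : ℕ :=
  ∑ i, Finset.univ.sup (sig i).np

/-! ### Abstractions -/

section Abstraction

variable {D : Schema} {n : ℕ} {sig : Fin (n+1) → AgentSig} {C U U' : Type}
  {Ag : ∀ i, Agent D (sig i) U} {Ag' : ∀ i, Agent D (sig i) U'}

/-- `A'` is the abstract agent corresponding to `A`, over the domain `U'`. -/
def IsAbstractAgent {g : AgentSig} (cst : C → U) (cst' : C → U')
    (A : Agent D g U) (A' : Agent D g U') : Prop :=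
  ∀ (l' : Inst D U') (α' : GAct g U'), α' ∈ A'.Pr l' ↔
    ∃ l ∈ A.L, ∃ α ∈ A.Pr l, ∃ ι : U → U',
      IsWitness cst cst' ι (fun _ : PUnit => l) (fun _ : PUnit => l') ∧
      ∃ ι' : U → U',
        (∀ u ∈ l.adom ∪ Set.range cst, ι' u = ι u) ∧
        Set.InjOn ι' (l.adom ∪ Set.range cst ∪ Set.range α.2) ∧
        α' = α.map ι'

/-- `M'` is an abstraction of `M` (over the abstract agents `Ag'`). -/
def IsAbstraction (cst : C → U) (cst' : C → U')
    (M : ACMAS D sig Ag) (M' : ACMAS D sig Ag') : Prop :=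
  (∀ i, IsAbstractAgent cst cst' (Ag i) (Ag' i)) ∧
  Iso cst' cst M'.s0 M.s0 ∧
  ∀ (s' t' : GState D n U') (a' : JAct sig U'),
    t' ∈ M'.τ s' a' ↔
      ∃ s ∈ M.S, ∃ t ∈ M.S, ∃ a : JAct sig U, t ∈ M.τ s a ∧
        ∃ ι : U → U', IsWitness cst cst' ι s s' ∧ IsWitness cst cst' ι t t' ∧
          ∃ ι' : U → U',
            (∀ u ∈ adomF s ∪ adomF t ∪ Set.range cst, ι' u = ι u) ∧
            Set.InjOn ι' (adomF s ∪ adomF t ∪ Set.range cst ∪ actElems a) ∧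
            a' = JAct.map ι' a

/-- `M'` is a ⊕-abstraction of `M` (over the abstract agents `Ag'`).
The requirement `s0' = s0` is rendered, across the two interpretation
domains, as: the initial states are isomorphic and `adom(s0) ⊆ C`. -/
def IsOAbstraction (cst : C → U) (cst' : C → U')
    (M : ACMAS D sig Ag) (M' : ACMAS D sig Ag') : Prop :=
  (∀ i, IsAbstractAgent cst cst' (Ag i) (Ag' i)) ∧
  (Iso cst cst' M.s0 M'.s0 ∧ adomF M.s0 ⊆ Set.range cst) ∧
  ∀ (s' t' : GState D n U') (a' : JAct sig U'),
    t' ∈ M'.τ s' a' ↔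
      ∃ s ∈ M.S, ∃ t ∈ M.S, ∃ a : JAct sig U, t ∈ M.τ s a ∧
        ∃ ι : U → U',
          IsWitness cst cst' ι (oplusG s t) (oplusG s' t') ∧
          ∃ ι' : U → U',
            (∀ u ∈ adomF (oplusG s t) ∪ Set.range cst, ι' u = ι u) ∧
            Set.InjOn ι' (adomF (oplusG s t) ∪ Set.range cst ∪ actElems a) ∧
            a' = JAct.map ι' a

end Abstraction

/-! ### Temporal-epistemic specification languages -/

/-- Sentence-atomic FO-CTL formulas. -/
inductive SAFOCTL (D : Schema) (C : Type) : Type where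
  | atom : (ψ : FO D C) → ψ.free = ∅ → SAFOCTL D C
  | not : SAFOCTL D C → SAFOCTL D C
  | imp : SAFOCTL D C → SAFOCTL D C → SAFOCTL D C
  | ax : SAFOCTL D C → SAFOCTL D C
  | au : SAFOCTL D C → SAFOCTL D C → SAFOCTL D C
  | eu : SAFOCTL D C → SAFOCTL D C → SAFOCTL D C

/-- Satisfaction of SA-FO-CTL formulas at a global state. -/
def SAFOCTL.sat {D : Schema} {C : Type} {n : ℕ} {sig : Fin (n+1) → AgentSig}
    {U : Type} {Ag : ∀ i, Agent D (sig i) U}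
    (cst : C → U) (M : ACMAS D sig Ag) :
    SAFOCTL D C → GState D n U → Prop
  | .atom ψ _, s => ∀ σ, FO.sat cst (gInst s) σ ψ
  | .not φ, s => ¬ SAFOCTL.sat cst M φ s
  | .imp φ ψ, s => SAFOCTL.sat cst M φ s → SAFOCTL.sat cst M ψ s
  | .ax φ, s => ∀ r, M.IsRun r → r 0 = s → SAFOCTL.sat cst M φ (r 1)
  | .au φ ψ, s => ∀ r, M.IsRun r → r 0 = s →
      ∃ k, SAFOCTL.sat cst M ψ (r k) ∧ ∀ j < k, SAFOCTL.sat cst M φ (r j)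
  | .eu φ ψ, s => ∃ r, M.IsRun r ∧ r 0 = s ∧
      ∃ k, SAFOCTL.sat cst M ψ (r k) ∧ ∀ j < k, SAFOCTL.sat cst M φ (r j)

/-- `P ⊨ φ` for SA-FO-CTL. -/
def SAFOCTL.satM {D : Schema} {C : Type} {n : ℕ} {sig : Fin (n+1) → AgentSig}
    {U : Type} {Ag : ∀ i, Agent D (sig i) U}
    (cst : C → U) (M : ACMAS D sig Ag) (φ : SAFOCTL D C) : Prop :=
  SAFOCTL.sat cst M φ M.s0

/-- FO-CTLK formulas, with epistemic operators for agents `1, …, n` and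
common knowledge. -/
inductive FOCTLK (D : Schema) (C : Type) (n : ℕ) : Type where
  | atom : FO D C → FOCTLK D C n
  | not : FOCTLK D C n → FOCTLK D C n
  | imp : FOCTLK D C n → FOCTLK D C n → FOCTLK D C n
  | all : ℕ → FOCTLK D C n → FOCTLK D C n
  | ax : FOCTLK D C n → FOCTLK D C n
  | au : FOCTLK D C n → FOCTLK D C n → FOCTLK D C n
  | eu : FOCTLK D C n → FOCTLK D C n → FOCTLK D C n
  | know : Fin n → FOCTLK D C n → FOCTLK D C n
  | ck : FOCTLK D C n → FOCTLK D C n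

namespace FOCTLK

variable {D : Schema} {C : Type} {n : ℕ}

def free : FOCTLK D C n → Finset ℕ
  | .atom ψ => ψ.free
  | .not φ => φ.free
  | .imp φ ψ => φ.free ∪ ψ.free
  | .all x φ => φ.free.erase x
  | .ax φ => φ.free
  | .au φ ψ => φ.free ∪ ψ.free
  | .eu φ ψ => φ.free ∪ ψ.free
  | .know _ φ => φ.free
  | .ck φ => φ.free

def vars : FOCTLK D C n → Finset ℕ
  | .atom ψ => ψ.vars
  | .not φ => φ.vars
  | .imp φ ψ => φ.vars ∪ ψ.vars
  | .all x φ => insert x φ.vars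
  | .ax φ => φ.vars
  | .au φ ψ => φ.vars ∪ ψ.vars
  | .eu φ ψ => φ.vars ∪ ψ.vars
  | .know _ φ => φ.vars
  | .ck φ => φ.vars

/-- Satisfaction `(P, s, σ) ⊨ φ` of FO-CTLK formulas. -/
def sat {sig : Fin (n+1) → AgentSig} {U : Type} {Ag : ∀ i, Agent D (sig i) U}
    (cst : C → U) (M : ACMAS D sig Ag) :
    FOCTLK D C n → GState D n U → (ℕ → U) → Prop
  | .atom ψ, s, σ => FO.sat cst (gInst s) σ ψ
  | .not φ, s, σ => ¬ sat cst M φ s σ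
  | .imp φ ψ, s, σ => sat cst M φ s σ → sat cst M ψ s σ
  | .all x φ, s, σ => ∀ u ∈ adomF s, sat cst M φ s (Function.update σ x u)
  | .ax φ, s, σ => ∀ r, M.IsRun r → r 0 = s → sat cst M φ (r 1) σ
  | .au φ ψ, s, σ => ∀ r, M.IsRun r → r 0 = s →
      ∃ k, sat cst M ψ (r k) σ ∧ ∀ j < k, sat cst M φ (r j) σ
  | .eu φ ψ, s, σ => ∃ r, M.IsRun r ∧ r 0 = s ∧
      ∃ k, sat cst M ψ (r k) σ ∧ ∀ j < k, sat cst M φ (r j) σ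
  | .know i φ, s, σ => ∀ t, M.Epi i.succ s t → sat cst M φ t σ
  | .ck φ, s, σ => ∀ t, Relation.TransGen M.EpiAny s t → sat cst M φ t σ

/-- `P ⊨ φ` for FO-CTLK: satisfaction at the initial state under every
assignment. -/
def satM {sig : Fin (n+1) → AgentSig} {U : Type} {Ag : ∀ i, Agent D (sig i) U}
    (cst : C → U) (M : ACMAS D sig Ag) (φ : FOCTLK D C n) : Prop :=
  ∀ σ : ℕ → U, sat cst M φ M.s0 σ

end FOCTLK

/-- FO-ECTLK: the existential fragment. -/
inductive FOECTLK (D : Schema) (C : Type) (n : ℕ) : Type where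
  | atom : FO D C → FOECTLK D C n
  | and : FOECTLK D C n → FOECTLK D C n → FOECTLK D C n
  | or : FOECTLK D C n → FOECTLK D C n → FOECTLK D C n
  | all : ℕ → FOECTLK D C n → FOECTLK D C n
  | ex : ℕ → FOECTLK D C n → FOECTLK D C n
  | enext : FOECTLK D C n → FOECTLK D C n
  | eu : FOECTLK D C n → FOECTLK D C n → FOECTLK D C n
  | dknow : Fin n → FOECTLK D C n → FOECTLK D C n
  | dck : FOECTLK D C n → FOECTLK D C n

/-- Satisfaction of FO-ECTLK formulas. -/
def FOECTLK.sat {D : Schema} {C : Type} {n : ℕ} {sig : Fin (n+1) → AgentSig}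
    {U : Type} {Ag : ∀ i, Agent D (sig i) U}
    (cst : C → U) (M : ACMAS D sig Ag) :
    FOECTLK D C n → GState D n U → (ℕ → U) → Prop
  | .atom ψ, s, σ => FO.sat cst (gInst s) σ ψ
  | .and φ ψ, s, σ => FOECTLK.sat cst M φ s σ ∧ FOECTLK.sat cst M ψ s σ
  | .or φ ψ, s, σ => FOECTLK.sat cst M φ s σ ∨ FOECTLK.sat cst M ψ s σ
  | .all x φ, s, σ => ∀ u ∈ adomF s, FOECTLK.sat cst M φ s (Function.update σ x u)
  | .ex x φ, s, σ => ∃ u ∈ adomF s, FOECTLK.sat cst M φ s (Function.update σ x u)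
  | .enext φ, s, σ => ∃ r, M.IsRun r ∧ r 0 = s ∧ FOECTLK.sat cst M φ (r 1) σ
  | .eu φ ψ, s, σ => ∃ r, M.IsRun r ∧ r 0 = s ∧
      ∃ k, FOECTLK.sat cst M ψ (r k) σ ∧ ∀ j < k, FOECTLK.sat cst M φ (r j) σ
  | .dknow i φ, s, σ => ∃ t, M.Epi i.succ s t ∧ FOECTLK.sat cst M φ t σ
  | .dck φ, s, σ => ∃ t, Relation.TransGen M.EpiAny s t ∧ FOECTLK.sat cst M φ t σ

/-- `P ⊨ φ` for FO-ECTLK. -/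
def FOECTLK.satM {D : Schema} {C : Type} {n : ℕ} {sig : Fin (n+1) → AgentSig}
    {U : Type} {Ag : ∀ i, Agent D (sig i) U}
    (cst : C → U) (M : ACMAS D sig Ag) (φ : FOECTLK D C n) : Prop :=
  ∀ σ : ℕ → U, FOECTLK.sat cst M φ M.s0 σ

/-- `Mb` is the `b`-restriction of `M`. -/
def IsBRestriction {D : Schema} {n : ℕ} {sig : Fin (n+1) → AgentSig} {U : Type}
    {Ag : ∀ i, Agent D (sig i) U} (Mb M : ACMAS D sig Ag) (b : ℕ) : Prop :=
  Mb.s0 = M.s0 ∧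
  Mb.S = { s ∈ M.S | (adomF s).Finite ∧ (adomF s).ncard ≤ b } ∧
  ∀ s a, Mb.τ s a = { t ∈ M.τ s a | s ∈ Mb.S ∧ t ∈ Mb.S }

/-! ### Artifact-centric programs -/

/-- A declarative artifact-centric program. -/
structure ACProgram (D : Schema) (C : Type) {n : ℕ} (sig : Fin (n+1) → AgentSig) where
  /-- local database schemas, as sets of relation symbols -/
  locRel : Fin (n+1) → Set D.Rel
  locDisj : ∀ i j, i ≠ j → Disjoint (locRel i) (locRel j)
  /-- initial local states; their values are constants -/
  l0 : ∀ _ : Fin (n+1), Inst D C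
  l0_loc : ∀ i r, r ∉ locRel i → (l0 i).rel r = ∅
  /-- preconditions: FO-formulas over the local schema whose free variables
  are among the action parameters -/
  pre : ∀ i, (sig i).Act → FO D C
  /-- postconditions: FO-formulas over the global schema and its primed copy -/
  post : ∀ i, (sig i).Act → FO D.double C
  pre_free : ∀ i a, ↑(pre i a).free ⊆ { x : ℕ | x < (sig i).np a }
  post_free : ∀ i a, ↑(post i a).free ⊆ { x : ℕ | x < (sig i).np a }
  pre_loc : ∀ i a, (pre i a).UsesOnly (locRel i)

namespace ACProgram

variable {D : Schema} {C : Type} {n : ℕ} {sig : Fin (n+1) → AgentSig}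

/-- The constants mentioned in the program. -/
def progConsts (P : ACProgram D C sig) : Set C :=
  (⋃ i, (P.l0 i).adom) ∪
  ⋃ i, ⋃ a : (sig i).Act, ((P.pre i a).consts ∪ (P.post i a).consts)

/-- Ground values of the postcondition parameters of a joint ground action. -/
def postElems (P : ACProgram D C sig) {U : Type} (a : JAct sig U) : Set U :=
  { u | ∃ (i : Fin (n+1)) (j : Fin ((sig i).np (a i).1)),
      (j : ℕ) ∈ (P.post i (a i).1).free ∧ (a i).2 j = u }

/-- The agent induced by the program for index `i`. -/
def InducedAgent {U : Type} (cst : C → U) (P : ACProgram D C sig) (i : Fin (n+1))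
    (A : Agent D (sig i) U) : Prop :=
  A.L = { l : Inst D U | ∀ r, r ∉ P.locRel i → l.rel r = ∅ } ∧
  ∀ (l : Inst D U) (α : GAct (sig i) U), α ∈ A.Pr l ↔
    ∀ σ : ℕ → U, (∀ j : Fin ((sig i).np α.1), σ (j : ℕ) = α.2 j) →
      FO.sat cst l σ (P.pre i α.1)

/-- The transitions induced by the program. -/
def InducedTrans {U : Type} (cst : C → U) (P : ACProgram D C sig)
    (s t : GState D n U) (a : JAct sig U) : Prop :=
  (∀ i, ∀ σ : ℕ → U, (∀ j : Fin ((sig i).np (a i).1), σ (j : ℕ) = (a i).2 j) →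
      FO.sat cst (s i) σ (P.pre i (a i).1)) ∧
  adomF t ⊆ adomF s ∪ P.postElems a ∪ cst '' (⋃ i, (P.post i (a i).1).consts) ∧
  (∀ i, ∀ σ : ℕ → U, (∀ j : Fin ((sig i).np (a i).1), σ (j : ℕ) = (a i).2 j) →
      FO.sat cst ((gInst s).oplus (gInst t)) σ (P.post i (a i).1))

/-- `M` is the AC-MAS induced by the program `P` (the transition relation is
assumed to be serial). -/
def InducedACMAS {U : Type} (cst : C → U) (P : ACProgram D C sig)
    (Ag : ∀ i, Agent D (sig i) U) (M : ACMAS D sig Ag) : Prop :=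
  (∀ i, P.InducedAgent cst i (Ag i)) ∧
  M.s0 = (fun i => (P.l0 i).map cst) ∧
  (∀ s t a, t ∈ M.τ s a ↔ P.InducedTrans cst s t a) ∧
  M.Std

end ACProgram

/-!
An isomorphism of states, an equivalence of assignments and the renamings of action parameters in
the definitions of uniformity and of `⊕`-abstraction are all given by maps that preserve the
constants and are injective on finitely many individuals. If the target domain is large enough,
such a map extends injectively to the individuals of a further state and then either to the
parameters of an action or to the values of the variables of `φ`: this is where
`2b + |C| + max{|vars(φ)|, N_Ag}` comes from. By the definition of the abstraction a renamed
transition of `P` is a transition of `P'`, and by uniformity the converse holds too. As the initial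
state mentions constants only, every isomorphic copy of a state of `P` in the other domain is
therefore reachable in `P'`, and vice versa, so epistemic steps, like temporal ones, are matched by
their renamings. Hence equivalent configurations match each other's steps, and truth is
transferred along them by induction on `φ`. It suffices to transfer it in one direction, for all
pairs of systems at once: negation and the universal operators exchange the roles of the systems.
-/

section Sets

variable {α β : Type*}

theorem encard_range_le (f : α → β) : (range f).encard ≤ ENat.card α := by
  rw [← image_univ, ← encard_univ]
  exact encard_image_le f univ

theorem exists_injOn_extension {f : α → β} {A B : Set α} (hf : InjOn f A)
    (hAB : A ⊆ B) (hB : B.Finite) (hcard : B.encard ≤ ENat.card β) :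
    ∃ g : α → β, EqOn g f A ∧ InjOn g B := by
  classical
  rcases isEmpty_or_nonempty β with _ | _
  · have := Function.isEmpty f
    exact ⟨f, fun _ _ => rfl, injOn_of_subsingleton f B⟩
  have hroom : (B \ A).encard ≤ (f '' A)ᶜ.encard := by
    refine (ENat.add_le_add_iff_left (hB.subset hAB).encard_lt_top.ne).1 ?_
    calc A.encard + (B \ A).encard = B.encard := by
          rw [add_comm, encard_sdiff_add_encard_of_subset hAB]
      _ ≤ (univ : Set β).encard := by rwa [encard_univ]
      _ = A.encard + (f '' A)ᶜ.encard := by rw [← encard_add_encard_compl, hf.encard_image]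
  obtain ⟨h, hmaps, hinj⟩ := hB.sdiff.exists_injOn_of_encard_le hroom
  have hg : EqOn (A.piecewise f h) f A := piecewise_eqOn A f h
  have hg' : EqOn (A.piecewise f h) h (B \ A) :=
    (piecewise_eqOn_compl A f h).mono fun _ hx => hx.2
  refine ⟨A.piecewise f h, hg, ?_⟩
  rw [← union_sdiff_cancel hAB, injOn_union disjoint_sdiff_right]
  refine ⟨hg.injOn_iff.2 hf, hg'.injOn_iff.2 hinj, fun x hx y hy hxy => ?_⟩
  rw [hg hx, hg' hy] at hxy
  exact hmaps hy (hxy ▸ mem_image_of_mem f hx)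

end Sets

section Images

variable {D : Schema} {U U' U'' X : Type}

theorem Inst.rel_injective : Function.Injective (Inst.rel : Inst D U → _) := by
  rintro ⟨_, _⟩ ⟨_, _⟩ rfl
  rfl

theorem Inst.map_congr {f g : U → U'} {I : Inst D U} (h : EqOn f g I.adom) :
    I.map f = I.map g :=
  Inst.rel_injective <| funext fun r => image_congr fun t ht =>
    funext fun j => h ⟨r, t, ht, j, rfl⟩

theorem Inst.map_map (f : U → U') (g : U' → U'') (I : Inst D U) :
    (I.map f).map g = I.map (g ∘ f) :=
  Inst.rel_injective <| funext fun r => image_image _ _ (I.rel r)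

theorem Inst.map_id (I : Inst D U) : I.map id = I :=
  Inst.rel_injective <| funext fun r => image_id (I.rel r)

theorem Inst.adom_map (f : U → U') (I : Inst D U) : (I.map f).adom = f '' I.adom := by
  ext u
  constructor
  · rintro ⟨r, _, ⟨t, ht, rfl⟩, j, rfl⟩
    exact ⟨t j, ⟨r, t, ht, j, rfl⟩, rfl⟩
  · rintro ⟨_, ⟨r, t, ht, j, rfl⟩, rfl⟩
    exact ⟨r, f ∘ t, ⟨t, ht, rfl⟩, j, rfl⟩

theorem Inst.map_oplus (f : U → U') (I J : Inst D U) :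
    (I.oplus J).map f = (I.map f).oplus (J.map f) :=
  Inst.rel_injective <| funext fun r => by cases r <;> rfl

theorem Inst.oplus_inj {I J I' J' : Inst D U} : I.oplus J = I'.oplus J' ↔ I = I' ∧ J = J' := by
  refine ⟨fun h => ⟨?_, ?_⟩, fun ⟨hI, hJ⟩ => hI ▸ hJ ▸ rfl⟩
  · exact Inst.rel_injective <| funext fun r => congrFun (congrArg Inst.rel h) (.inl r)
  · exact Inst.rel_injective <| funext fun r => congrFun (congrArg Inst.rel h) (.inr r)

theorem Inst.adom_oplus (I J : Inst D U) : (I.oplus J).adom = I.adom ∪ J.adom := by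
  ext u
  constructor
  · rintro ⟨r | r, t, ht, j, rfl⟩
    exacts [.inl ⟨r, t, ht, j, rfl⟩, .inr ⟨r, t, ht, j, rfl⟩]
  · rintro (⟨r, t, ht, j, rfl⟩ | ⟨r, t, ht, j, rfl⟩)
    exacts [⟨.inl r, t, ht, j, rfl⟩, ⟨.inr r, t, ht, j, rfl⟩]

theorem mem_adomF_of_mem_rel {s : X → Inst D U} {i : X} {r : D.Rel}
    {t : Fin (D.arity r) → U} (ht : t ∈ (s i).rel r) (j : Fin (D.arity r)) : t j ∈ adomF s :=
  mem_iUnion.2 ⟨i, r, t, ht, j, rfl⟩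

/-- The componentwise image of a family of instances (in particular of a global state) under a
map of domains. -/
def mapF (f : U → U') (s : X → Inst D U) : X → Inst D U' := fun i => (s i).map f

theorem mapF_congr {f g : U → U'} {s : X → Inst D U} (h : EqOn f g (adomF s)) :
    mapF f s = mapF g s :=
  funext fun i => Inst.map_congr (h.mono (subset_iUnion (fun i => (s i).adom) i))

theorem mapF_mapF (f : U → U') (g : U' → U'') (s : X → Inst D U) :
    mapF g (mapF f s) = mapF (g ∘ f) s :=
  funext fun i => Inst.map_map f g (s i)

theorem mapF_eq_self {f : U → U} {s : X → Inst D U} (h : EqOn f id (adomF s)) : mapF f s = s :=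
  (mapF_congr h).trans (funext fun i => Inst.map_id (s i))

theorem adomF_mapF (f : U → U') (s : X → Inst D U) : adomF (mapF f s) = f '' adomF s := by
  simp only [adomF, mapF, Inst.adom_map, image_iUnion]

variable {n : ℕ}

theorem adom_gInst (s : GState D n U) : (gInst s).adom = adomF s := by
  ext u
  simp only [Inst.adom, gInst, adomF, mem_iUnion, mem_ofPred_eq]
  constructor
  · rintro ⟨r, t, ⟨i, ht⟩, j, rfl⟩
    exact ⟨i, r, t, ht, j, rfl⟩
  · rintro ⟨i, r, t, ht, j, rfl⟩
    exact ⟨r, t, ⟨i, ht⟩, j, rfl⟩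

theorem mapF_oplusG (f : U → U') (s t : GState D n U) :
    mapF f (oplusG s t) = oplusG (mapF f s) (mapF f t) :=
  funext fun i => Inst.map_oplus f (s i) (t i)

theorem oplusG_inj {s t s' t' : GState D n U} :
    oplusG s t = oplusG s' t' ↔ s = s' ∧ t = t' := by
  simp only [funext_iff, oplusG, Inst.oplus_inj, forall_and]

theorem adomF_oplusG (s t : GState D n U) : adomF (oplusG s t) = adomF s ∪ adomF t := by
  simp only [adomF, oplusG, Inst.adom_oplus, iUnion_union_distrib]

end Images

section Actions

variable {n : ℕ} {sig : Fin (n + 1) → AgentSig} {U U' U'' : Type}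

theorem JAct.map_map (f : U → U') (g : U' → U'') (a : JAct sig U) :
    (a.map f).map g = a.map (g ∘ f) := rfl

theorem actElems_eq_range (a : JAct sig U) :
    actElems a = range fun p : Σ i, Fin ((sig i).np (a i).1) => (a p.1).2 p.2 := by
  ext u
  simp only [actElems, mem_ofPred_eq, mem_range, Sigma.exists]

theorem actElems_map (f : U → U') (a : JAct sig U) : actElems (a.map f) = f '' actElems a := by
  rw [actElems_eq_range, actElems_eq_range, ← range_comp]
  rfl

theorem encard_actElems_le (a : JAct sig U) : (actElems a).encard ≤ NAg sig := by
  rw [actElems_eq_range]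
  refine (encard_range_le _).trans ?_
  rw [ENat.card_eq_coe_fintype_card, Fintype.card_sigma, Nat.cast_le]
  simp only [Fintype.card_fin]
  exact Finset.sum_le_sum fun i _ => Finset.le_sup (f := (sig i).np) (Finset.mem_univ _)

end Actions

section Renamings

variable {C U U' U'' : Type} {cst : C → U} {cst' : C → U'} {cst'' : C → U''}
  {f : U → U'} {A B : Set U}

/-- `f` preserves the constants and is injective on them together with the individuals in `A`.
Isomorphisms, equivalences of assignments and the renamings of action parameters in the definitions
of uniformity and of `⊕`-abstraction are all given by such maps. -/
structure IsRenaming (cst : C → U) (cst' : C → U') (f : U → U') (A : Set U) : Prop where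
  injOn : InjOn f (A ∪ range cst)
  map_cst : ∀ c, f (cst c) = cst' c

namespace IsRenaming

theorem mono (h : IsRenaming cst cst' f B) (hAB : A ⊆ B) : IsRenaming cst cst' f A :=
  ⟨h.injOn.mono (union_subset_union_left _ hAB), h.map_cst⟩

theorem image_union_range (h : IsRenaming cst cst' f A) :
    f '' (A ∪ range cst) = f '' A ∪ range cst' := by
  rw [image_union, ← range_comp, show f ∘ cst = cst' from funext h.map_cst]

theorem comp {g : U' → U''} (hg : IsRenaming cst' cst'' g (f '' A))
    (hf : IsRenaming cst cst' f A) : IsRenaming cst cst'' (g ∘ f) A where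
  injOn := hg.injOn.comp hf.injOn (hf.image_union_range ▸ mapsTo_image f _)
  map_cst c := by rw [Function.comp_apply, hf.map_cst, hg.map_cst]

theorem exists_leftInverse [Nonempty U] (h : IsRenaming cst cst' f A) :
    ∃ g : U' → U, IsRenaming cst' cst g (f '' A) ∧ EqOn (g ∘ f) id A := by
  have hinv : LeftInvOn (Function.invFunOn f (A ∪ range cst)) f (A ∪ range cst) :=
    h.injOn.leftInvOn_invFunOn
  refine ⟨Function.invFunOn f (A ∪ range cst), ⟨?_, fun c => ?_⟩, fun u hu => hinv (.inl hu)⟩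
  · rw [← h.image_union_range]
    exact hinv.rightInvOn_image.injOn
  · rw [← h.map_cst]
    exact hinv (.inr (mem_range_self c))

theorem exists_extension (h : IsRenaming cst cst' f A) (hAB : A ⊆ B)
    (hB : (B ∪ range cst).Finite) (hcard : (B ∪ range cst).encard ≤ ENat.card U') :
    ∃ g : U → U', EqOn g f A ∧ IsRenaming cst cst' g B := by
  obtain ⟨g, hgf, hg⟩ :=
    exists_injOn_extension h.injOn (union_subset_union_left _ hAB) hB hcard
  exact ⟨g, hgf.mono subset_union_left, hg,
    fun c => (hgf (.inr (mem_range_self c))).trans (h.map_cst c)⟩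

end IsRenaming

variable {D : Schema} {X : Type} {s : X → Inst D U} {s' : X → Inst D U'} {ι : U → U'}

theorem IsRenaming.isWitness (h : IsRenaming cst cst' ι (adomF s)) :
    IsWitness cst cst' ι s (mapF ι s) := by
  refine ⟨?_, h.map_cst, fun i r t ht => ⟨fun hmem => ⟨t, hmem, rfl⟩, ?_⟩⟩
  · rw [adomF_mapF, ← h.image_union_range]
    exact h.injOn.bijOn_image
  · rintro ⟨t', ht', heq⟩
    have : t' = t := funext fun j =>
      h.injOn (.inl (mem_adomF_of_mem_rel ht' j)) (ht j) (congrFun heq j)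
    exact this ▸ ht'

theorem isWitness_iff :
    IsWitness cst cst' ι s s' ↔ IsRenaming cst cst' ι (adomF s) ∧ s' = mapF ι s := by
  refine ⟨fun ⟨hbij, hcst, hrel⟩ => ⟨⟨hbij.injOn, hcst⟩, ?_⟩, ?_⟩
  · refine funext fun i => Inst.rel_injective <| funext fun r => Subset.antisymm ?_ ?_
    · intro t' ht'
      choose t ht htt using fun j => hbij.surjOn (.inl (mem_adomF_of_mem_rel ht' j))
      obtain rfl : (fun j => ι (t j)) = t' := funext htt
      exact ⟨t, (hrel i r t ht).2 ht', rfl⟩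
    · rintro _ ⟨t, ht, rfl⟩
      exact (hrel i r t fun j => .inl (mem_adomF_of_mem_rel ht j)).1 ht
  · rintro ⟨hι, rfl⟩
    exact hι.isWitness

theorem Iso.adomF_subset_range (h : Iso cst cst' s s') (hs : adomF s ⊆ range cst) :
    adomF s' ⊆ range cst' := by
  obtain ⟨ι, hwit⟩ := h
  obtain ⟨hι, rfl⟩ := isWitness_iff.1 hwit
  have himage := image_mono (f := ι) hs
  rwa [← adomF_mapF, ← range_comp, show ι ∘ cst = cst' from funext hι.map_cst] at himage

theorem Iso.symm [Nonempty U] (h : Iso cst cst' s s') : Iso cst' cst s' s := by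
  obtain ⟨ι, hwit⟩ := h
  obtain ⟨hι, rfl⟩ := isWitness_iff.1 hwit
  obtain ⟨κ, hκ, hκι⟩ := hι.exists_leftInverse
  refine ⟨κ, isWitness_iff.2 ⟨by rwa [adomF_mapF], ?_⟩⟩
  rw [mapF_mapF, mapF_eq_self hκι]

variable {n : ℕ}

theorem IsRenaming.isWitness_oplusG {s t : GState D n U}
    (h : IsRenaming cst cst' f (adomF s ∪ adomF t)) :
    IsWitness cst cst' f (oplusG s t) (oplusG (mapF f s) (mapF f t)) := by
  rw [← mapF_oplusG]
  exact IsRenaming.isWitness (by rwa [adomF_oplusG])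

end Renamings

section EquivalentAssignments

variable {D : Schema} {n : ℕ} {C U U' : Type} {cst : C → U} {cst' : C → U'} {V : Set ℕ}
  {σ : ℕ → U} {σ' : ℕ → U'} {s : GState D n U} {s' : GState D n U'}

theorem eqAssign_iff : EqAssign cst cst' V σ σ' s s' ↔
    ∃ γ, IsRenaming cst cst' γ (adomF s ∪ σ '' V) ∧ s' = mapF γ s ∧ EqOn σ' (γ ∘ σ) V := by
  constructor
  · rintro ⟨γ, hbij, hwit, hσ⟩
    refine ⟨γ, ⟨?_, hwit.2.1⟩, (isWitness_iff.1 hwit).2, hσ⟩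
    rw [union_right_comm]
    exact hbij.injOn
  · rintro ⟨γ, hγ, rfl, hσ⟩
    refine ⟨γ, ?_, (hγ.mono subset_union_left).isWitness, hσ⟩
    have himage : γ '' (adomF s ∪ range cst ∪ σ '' V) =
        adomF (mapF γ s) ∪ range cst' ∪ σ' '' V := by
      rw [union_right_comm, hγ.image_union_range, image_union, ← image_comp, ← hσ.image_eq,
        adomF_mapF, union_right_comm]
    rw [← himage, union_right_comm]
    exact hγ.injOn.bijOn_image

namespace EqAssign

theorem symm (h : EqAssign cst cst' V σ σ' s s') : EqAssign cst' cst V σ' σ s' s := by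
  have : Nonempty U := ⟨σ 0⟩
  obtain ⟨γ, hγ, rfl, hσ⟩ := eqAssign_iff.1 h
  obtain ⟨δ, hδ, hδγ⟩ := hγ.exists_leftInverse
  refine eqAssign_iff.2 ⟨δ, ?_, ?_, fun x hx => ?_⟩
  · rwa [image_union, ← image_comp, ← hσ.image_eq, ← adomF_mapF] at hδ
  · rw [mapF_mapF, mapF_eq_self (hδγ.mono subset_union_left)]
  · rw [Function.comp_apply, hσ hx]
    exact (hδγ (.inr (mem_image_of_mem σ hx))).symm

theorem exists_update (h : EqAssign cst cst' V σ σ' s s') (x : ℕ) {u : U} (hu : u ∈ adomF s) :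
    ∃ u' ∈ adomF s',
      EqAssign cst cst' V (Function.update σ x u) (Function.update σ' x u') s s' := by
  obtain ⟨γ, hγ, rfl, hσ⟩ := eqAssign_iff.1 h
  refine ⟨γ u, adomF_mapF γ s ▸ mem_image_of_mem γ hu,
    eqAssign_iff.2 ⟨γ, hγ.mono ?_, rfl, fun y hy => ?_⟩⟩
  · refine union_subset subset_union_left ?_
    rintro _ ⟨y, hy, rfl⟩
    obtain rfl | hyx := eq_or_ne y x
    · rw [Function.update_self]
      exact .inl hu
    · rw [Function.update_of_ne hyx]
      exact .inr (mem_image_of_mem σ hy)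
  · obtain rfl | hyx := eq_or_ne y x
    · simp only [Function.comp_apply, Function.update_self]
    · simpa only [Function.comp_apply, Function.update_of_ne hyx] using hσ hy

end EqAssign

theorem Term.val_map {γ : U → U'} (hcst : ∀ c, γ (cst c) = cst' c) (hσ : EqOn σ' (γ ∘ σ) V) :
    ∀ {t : Term C}, (t.varsF : Set ℕ) ⊆ V → t.val cst' σ' = γ (t.val cst σ)
  | .inl _, ht => hσ (ht (Finset.mem_singleton_self _))
  | .inr c, _ => (hcst c).symm

theorem EqAssign.sat_eq (h : EqAssign cst cst' V σ σ' s s') {t₁ t₂ : Term C}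
    (hV : ((FO.eq t₁ t₂ : FO D C).vars : Set ℕ) ⊆ V)
    (hsat : FO.sat cst (gInst s) σ (.eq t₁ t₂)) : FO.sat cst' (gInst s') σ' (.eq t₁ t₂) := by
  obtain ⟨γ, hγ, -, hσ⟩ := eqAssign_iff.1 h
  obtain ⟨hV₁, hV₂⟩ := union_subset_iff.1 ((Finset.coe_union _ _).symm.trans_subset hV)
  have heq : t₁.val cst σ = t₂.val cst σ := hsat
  change t₁.val cst' σ' = t₂.val cst' σ'
  rw [Term.val_map hγ.map_cst hσ hV₁, Term.val_map hγ.map_cst hσ hV₂, heq]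

theorem EqAssign.sat_rel (h : EqAssign cst cst' V σ σ' s s') {r : D.Rel}
    {ts : Fin (D.arity r) → Term C} (hV : ((FO.rel r ts : FO D C).vars : Set ℕ) ⊆ V)
    (hsat : FO.sat cst (gInst s) σ (.rel r ts)) : FO.sat cst' (gInst s') σ' (.rel r ts) := by
  obtain ⟨γ, hγ, rfl, hσ⟩ := eqAssign_iff.1 h
  have hval : (fun j => (ts j).val cst' σ') = γ ∘ fun j => (ts j).val cst σ := funext fun j =>
    Term.val_map hγ.map_cst hσ fun x hx =>
      hV (Finset.mem_biUnion.2 ⟨j, Finset.mem_univ j, hx⟩)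
  obtain ⟨i, hi⟩ := mem_iUnion.1 hsat
  change (fun j => (ts j).val cst' σ') ∈ (gInst (mapF γ s)).rel r
  rw [hval]
  exact mem_iUnion.2 ⟨i, _, hi, rfl⟩

theorem EqAssign.sat {ψ : FO D C} (h : EqAssign cst cst' V σ σ' s s')
    (hV : (ψ.vars : Set ℕ) ⊆ V) (hsat : FO.sat cst (gInst s) σ ψ) :
    FO.sat cst' (gInst s') σ' ψ := by
  induction ψ generalizing U U' with
  | eq t₁ t₂ => exact h.sat_eq hV hsat
  | rel r ts => exact h.sat_rel hV hsat
  | not ψ ih => exact fun hψ => hsat (ih h.symm hV hψ)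
  | imp ψ χ ihψ ihχ =>
    obtain ⟨hVψ, hVχ⟩ := union_subset_iff.1 ((Finset.coe_union _ _).symm.trans_subset hV)
    exact fun hψ => ihχ h hVχ (hsat (ihψ h.symm hVψ hψ))
  | all x ψ ih =>
    intro u' hu'
    obtain ⟨u, hu, hupd⟩ := h.symm.exists_update x (adom_gInst s' ▸ hu')
    exact ih hupd.symm ((Finset.coe_subset.2 (Finset.subset_insert x _)).trans hV)
      (hsat u (adom_gInst s ▸ hu))

end EquivalentAssignments

section Simulations

variable {α β : Type*} {R : α → β → Prop} {Q : α → α → Prop} {Q' : β → β → Prop}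

/-- `R` is a simulation of the steps of `Q` by the steps of `Q'`: related points stay related
after some step of `Q'` answering a given step of `Q`. -/
def Simulates (R : α → β → Prop) (Q : α → α → Prop) (Q' : β → β → Prop) : Prop :=
  ∀ ⦃x y x'⦄, R x y → Q x x' → ∃ y', Q' y y' ∧ R x' y'

namespace Simulates

theorem transGen (h : Simulates R Q Q') :
    Simulates R (Relation.TransGen Q) (Relation.TransGen Q') := by
  intro x y x' hxy hxx'
  induction hxx' with
  | single hstep =>
    obtain ⟨y', hyy', hR⟩ := h hxy hstep
    exact ⟨y', .single hyy', hR⟩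
  | tail _ hstep ih =>
    obtain ⟨y', hyy', hR⟩ := ih
    obtain ⟨y'', hy'y'', hR'⟩ := h hR hstep
    exact ⟨y'', hyy'.tail hy'y'', hR'⟩

theorem exists_seq (h : Simulates R Q Q') {r : ℕ → α} (hr : ∀ k, Q (r k) (r (k + 1))) {y : β}
    (hy : R (r 0) y) :
    ∃ r' : ℕ → β, r' 0 = y ∧ (∀ k, Q' (r' k) (r' (k + 1))) ∧ ∀ k, R (r k) (r' k) := by
  have hstep : ∀ k (z : { z // R (r k) z }), ∃ z' : { z // R (r (k + 1)) z }, Q' z z' :=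
    fun k z =>
      have ⟨z', hQ', hR⟩ := h z.2 (hr k)
      ⟨⟨z', hR⟩, hQ'⟩
  choose next hnext using hstep
  let r' : ∀ k, { z // R (r k) z } := fun k => Nat.rec ⟨y, hy⟩ next k
  exact ⟨fun k => (r' k).1, rfl, fun k => hnext k (r' k), fun k => (r' k).2⟩

end Simulates

end Simulations

section Preservation

variable {D : Schema} {n : ℕ} {sig : Fin (n + 1) → AgentSig} {C U U' : Type}
  {Ag : ∀ i, Agent D (sig i) U} {Ag' : ∀ i, Agent D (sig i) U'}
  {cst : C → U} {cst' : C → U'} {M : ACMAS D sig Ag} {M' : ACMAS D sig Ag'} {V : Set ℕ}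
  {σ : ℕ → U} {σ' : ℕ → U'} {s : GState D n U} {s' : GState D n U'}

/-- The configurations `(M, s, σ)` and `(M', s', σ')` are equivalent: `s` and `s'` are states of
the two systems, and `σ` and `σ'` are equivalent on `V` with respect to them. -/
structure EqConfig (cst : C → U) (cst' : C → U') (M : ACMAS D sig Ag) (M' : ACMAS D sig Ag')
    (V : Set ℕ) (σ : ℕ → U) (σ' : ℕ → U') (s : GState D n U) (s' : GState D n U') : Prop where
  mem : s ∈ M.S
  mem' : s' ∈ M'.S
  eqAssign : EqAssign cst cst' V σ σ' s s'

theorem EqConfig.symm (h : EqConfig cst cst' M M' V σ σ' s s') :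
    EqConfig cst' cst M' M V σ' σ s' s :=
  ⟨h.mem', h.mem, h.eqAssign.symm⟩

/-- Equivalence of configurations is a simulation of the temporal and epistemic steps of `M` by
those of `M'`. -/
structure IsStepSimulation (cst : C → U) (cst' : C → U') (M : ACMAS D sig Ag)
    (M' : ACMAS D sig Ag') (V : Set ℕ) : Prop where
  tr : ∀ σ σ', Simulates (EqConfig cst cst' M M' V σ σ') M.Tr M'.Tr
  epi : ∀ σ σ' (i : Fin n),
    Simulates (EqConfig cst cst' M M' V σ σ') (M.Epi i.succ) (M'.Epi i.succ)

namespace IsStepSimulation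

theorem epiAny (h : IsStepSimulation cst cst' M M' V) (σ : ℕ → U) (σ' : ℕ → U') :
    Simulates (EqConfig cst cst' M M' V σ σ') M.EpiAny M'.EpiAny := by
  rintro s s' t hs ⟨i, hst⟩
  obtain ⟨t', hst', ht⟩ := h.epi σ σ' i hs hst
  exact ⟨t', ⟨i, hst'⟩, ht⟩

theorem exists_run (h : IsStepSimulation cst cst' M M' V)
    (hs : EqConfig cst cst' M M' V σ σ' s s') {r : ℕ → GState D n U} (hr : M.IsRun r)
    (hr0 : r 0 = s) :
    ∃ r', M'.IsRun r' ∧ r' 0 = s' ∧ ∀ k, EqConfig cst cst' M M' V σ σ' (r k) (r' k) := by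
  obtain ⟨r', hr'0, htr, hconf⟩ := (h.tr σ σ').exists_seq hr.2 (hr0 ▸ hs)
  exact ⟨r', ⟨fun k => (hconf k).mem', htr⟩, hr'0, hconf⟩

theorem sat {φ : FOCTLK D C n} (hV : (φ.vars : Set ℕ) ⊆ V)
    (h : IsStepSimulation cst cst' M M' V) (h' : IsStepSimulation cst' cst M' M V)
    (hs : EqConfig cst cst' M M' V σ σ' s s') (hsat : FOCTLK.sat cst M φ s σ) :
    FOCTLK.sat cst' M' φ s' σ' := by
  induction φ generalizing U U' with
  | atom ψ => exact hs.eqAssign.sat hV hsat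
  | not φ ih => exact fun hφ => hsat (ih hV h' h hs.symm hφ)
  | imp φ ψ ihφ ihψ =>
    obtain ⟨hVφ, hVψ⟩ := union_subset_iff.1 ((Finset.coe_union _ _).symm.trans_subset hV)
    exact fun hφ => ihψ hVψ h h' hs (hsat (ihφ hVφ h' h hs.symm hφ))
  | all x φ ih =>
    intro u' hu'
    obtain ⟨u, hu, hupd⟩ := hs.eqAssign.symm.exists_update x hu'
    exact ih ((Finset.coe_subset.2 (Finset.subset_insert x _)).trans hV) h h'
      ⟨hs.mem, hs.mem', hupd.symm⟩ (hsat u hu)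
  | ax φ ih =>
    intro r' hr' hr'0
    obtain ⟨r, hr, hr0, hconf⟩ := h'.exists_run hs.symm hr' hr'0
    exact ih hV h h' (hconf 1).symm (hsat r hr hr0)
  | au φ ψ ihφ ihψ =>
    obtain ⟨hVφ, hVψ⟩ := union_subset_iff.1 ((Finset.coe_union _ _).symm.trans_subset hV)
    intro r' hr' hr'0
    obtain ⟨r, hr, hr0, hconf⟩ := h'.exists_run hs.symm hr' hr'0
    obtain ⟨k, hψ, hφ⟩ := hsat r hr hr0
    exact ⟨k, ihψ hVψ h h' (hconf k).symm hψ,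
      fun j hj => ihφ hVφ h h' (hconf j).symm (hφ j hj)⟩
  | eu φ ψ ihφ ihψ =>
    obtain ⟨hVφ, hVψ⟩ := union_subset_iff.1 ((Finset.coe_union _ _).symm.trans_subset hV)
    obtain ⟨r, hr, hr0, k, hψ, hφ⟩ := hsat
    obtain ⟨r', hr', hr'0, hconf⟩ := h.exists_run hs hr hr0
    exact ⟨r', hr', hr'0, k, ihψ hVψ h h' (hconf k) hψ,
      fun j hj => ihφ hVφ h h' (hconf j) (hφ j hj)⟩
  | know i φ ih =>
    intro t' hst'
    obtain ⟨t, hst, ht⟩ := h'.epi σ' σ i hs.symm hst'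
    exact ih hV h h' ht.symm (hsat t hst)
  | ck φ ih =>
    intro t' hst'
    obtain ⟨t, hst, ht⟩ := (h'.epiAny σ' σ).transGen hs.symm hst'
    exact ih hV h h' ht.symm (hsat t hst)

end IsStepSimulation

end Preservation

section Transitions

variable {D : Schema} {n : ℕ} {sig : Fin (n + 1) → AgentSig} {C U U' : Type}
  {Ag : ∀ i, Agent D (sig i) U} {Ag' : ∀ i, Agent D (sig i) U'}
  {cst : C → U} {cst' : C → U'} {M : ACMAS D sig Ag} {M' : ACMAS D sig Ag'}

/-- Renaming a transition of `M` yields a transition of `M'`, provided that it starts in a state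
of `M'`. For `M' = M` this is the temporal condition of uniformity. -/
def TransitionsRenameInto (cst : C → U) (cst' : C → U') (M : ACMAS D sig Ag)
    (M' : ACMAS D sig Ag') : Prop :=
  ∀ ⦃s t a f⦄, s ∈ M.S → t ∈ M.τ s a →
    IsRenaming cst cst' f (adomF s ∪ adomF t ∪ actElems a) →
    mapF f s ∈ M'.S → mapF f t ∈ M'.τ (mapF f s) (a.map f)

theorem UniformT.transitionsRenameInto (h : UniformT cst M) :
    TransitionsRenameInto cst cst M M := by
  intro s t a f hs hst hf hfs
  refine h s hs t (M.tau_closed s hs a hst) _ hfs _ a hst f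
    (hf.mono subset_union_left).isWitness_oplusG f (fun _ _ => rfl) ?_ hf.map_cst
  rw [adomF_oplusG, union_right_comm]
  exact hf.injOn

namespace IsOAbstraction

theorem mem_tau_iff (h : IsOAbstraction cst cst' M M') {s' t' : GState D n U'}
    {a' : JAct sig U'} :
    t' ∈ M'.τ s' a' ↔ ∃ s ∈ M.S, ∃ t, ∃ a : JAct sig U, t ∈ M.τ s a ∧
      ∃ f, IsRenaming cst cst' f (adomF s ∪ adomF t ∪ actElems a) ∧
        s' = mapF f s ∧ t' = mapF f t ∧ a' = a.map f := by
  rw [h.2.2]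
  constructor
  · rintro ⟨s, hs, t, -, a, hst, ι, hι, f, hfι, hf, rfl⟩
    obtain ⟨hren, hmap⟩ := isWitness_iff.1 hι
    rw [← mapF_congr fun u hu => hfι u (.inl hu), mapF_oplusG, oplusG_inj] at hmap
    rw [adomF_oplusG, union_right_comm] at hf
    refine ⟨s, hs, t, a, hst, f, ⟨hf, fun c => ?_⟩, hmap.1, hmap.2, rfl⟩
    rw [hfι _ (.inr (mem_range_self c)), hren.map_cst]
  · rintro ⟨s, hs, t, a, hst, f, hf, rfl, rfl, rfl⟩
    refine ⟨s, hs, t, M.tau_closed s hs a hst, a, hst, f,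
      (hf.mono subset_union_left).isWitness_oplusG, f, fun _ _ => rfl, ?_, rfl⟩
    rw [adomF_oplusG, union_right_comm]
    exact hf.injOn

theorem transitionsRenameInto (h : IsOAbstraction cst cst' M M') :
    TransitionsRenameInto cst cst' M M' :=
  fun s t a f hs hst hf _ => h.mem_tau_iff.2 ⟨s, hs, t, a, hst, f, hf, rfl, rfl, rfl⟩

theorem transitionsRenameInto_symm (h : IsOAbstraction cst cst' M M')
    (hM : TransitionsRenameInto cst cst M M) : TransitionsRenameInto cst' cst M' M := by
  rintro s' t' a' f - hst' hf hfs'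
  obtain ⟨s, hs, t, a, hst, g, hg, rfl, rfl, rfl⟩ := h.mem_tau_iff.1 hst'
  rw [mapF_mapF] at hfs' ⊢
  rw [mapF_mapF, JAct.map_map]
  refine hM hs hst (.comp ?_ hg) hfs'
  rwa [image_union, image_union, ← adomF_mapF, ← adomF_mapF, ← actElems_map]

theorem exists_eq_mapF (h : IsOAbstraction cst cst' M M')
    (hreach : M'.S = { s | Relation.ReflTransGen M'.Tr M'.s0 s }) {s' : GState D n U'}
    (hs' : s' ∈ M'.S) : ∃ s ∈ M.S, ∃ f, s' = mapF f s := by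
  rw [hreach] at hs'
  obtain rfl | ⟨r', -, a', hr's'⟩ := hs'.cases_tail
  · obtain ⟨ι, hι⟩ := h.2.1.1
    exact ⟨M.s0, M.s0_mem, ι, (isWitness_iff.1 hι).2⟩
  · obtain ⟨r, hr, s, a, hrs, f, -, -, rfl, -⟩ := h.mem_tau_iff.1 hr's'
    exact ⟨s, M.tau_closed r hr a hrs, f, rfl⟩

theorem bBounded (h : IsOAbstraction cst cst' M M')
    (hreach : M'.S = { s | Relation.ReflTransGen M'.Tr M'.s0 s }) {b : ℕ}
    (hb : BBounded M b) : BBounded M' b := by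
  intro s' hs'
  obtain ⟨s, hs, f, rfl⟩ := h.exists_eq_mapF hreach hs'
  obtain ⟨hfin, hcard⟩ := hb s hs
  rw [adomF_mapF]
  exact ⟨hfin.image f, (ncard_image_le hfin).trans hcard⟩

end IsOAbstraction

end Transitions

section Room

variable {D : Schema} {n : ℕ} {sig : Fin (n + 1) → AgentSig} {C U U' : Type}
  {Ag : ∀ i, Agent D (sig i) U} {Ag' : ∀ i, Agent D (sig i) U'}
  {cst : C → U} {cst' : C → U'} {M : ACMAS D sig Ag} {M' : ACMAS D sig Ag'} {N : ℕ}

/-- `U'` is large enough to hold, next to the constants, renamed copies of the individuals of any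
two states of `M` together with `N` further individuals. -/
def HasRoom (cst : C → U) (M : ACMAS D sig Ag) (U' : Type) (N : ℕ) : Prop :=
  ∀ s ∈ M.S, ∀ t ∈ M.S, ∀ E : Set U, E.encard ≤ N →
    (adomF s ∪ adomF t ∪ E ∪ range cst).Finite ∧
      (adomF s ∪ adomF t ∪ E ∪ range cst).encard ≤ ENat.card U'

theorem BBounded.hasRoom [Finite C] {b : ℕ} (hb : BBounded M b) (cst : C → U)
    (hcard : ((2 * b + Nat.card C + N : ℕ) : Cardinal) ≤ Cardinal.mk U') :
    HasRoom cst M U' N := by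
  intro s hs t ht E hE
  have hs : (adomF s).encard ≤ b := encard_le_coe_iff_finite_ncard_le.2 (hb s hs)
  have ht : (adomF t).encard ≤ b := encard_le_coe_iff_finite_ncard_le.2 (hb t ht)
  have hC : (range cst).encard ≤ Nat.card C :=
    (encard_range_le cst).trans_eq (ENat.card_eq_coe_natCard C)
  have hle : (adomF s ∪ adomF t ∪ E ∪ range cst).encard ≤ (2 * b + Nat.card C + N : ℕ) :=
    calc (adomF s ∪ adomF t ∪ E ∪ range cst).encard
        ≤ (adomF s).encard + (adomF t).encard + E.encard + (range cst).encard := by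
          grw [encard_union_le, encard_union_le, encard_union_le]
      _ ≤ b + b + N + Nat.card C := by gcongr
      _ = (2 * b + Nat.card C + N : ℕ) := by push_cast; ring
  exact ⟨finite_of_encard_le_coe hle, hle.trans (Cardinal.natCast_le_toENat.2 hcard)⟩

/-- Every constant-preserving renaming of a transition of `M` is a transition of `M'`, the initial
states of the two systems are isomorphic and mention constants only, and `U'` has room for `N`
individuals besides those of two states, which covers the parameters of a joint action. -/
structure RenamesInto (cst : C → U) (cst' : C → U') (M : ACMAS D sig Ag) (M' : ACMAS D sig Ag')
    (N : ℕ) : Prop where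
  reach : M.S = { s | Relation.ReflTransGen M.Tr M.s0 s }
  init_subset : adomF M.s0 ⊆ range cst
  init_iso : Iso cst cst' M.s0 M'.s0
  transitions : TransitionsRenameInto cst cst' M M'
  params : NAg sig ≤ N
  room : HasRoom cst M U' N

namespace RenamesInto

variable {f : U → U'} {s t : GState D n U}

theorem exists_extension (h : RenamesInto cst cst' M M' N) (hs : s ∈ M.S) (ht : t ∈ M.S)
    {A E : Set U} (hE : E.encard ≤ N) (hf : IsRenaming cst cst' f A)
    (hA : A ⊆ adomF s ∪ adomF t ∪ E) :
    ∃ g, EqOn g f A ∧ IsRenaming cst cst' g (adomF s ∪ adomF t ∪ E) :=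
  have ⟨hfin, hcard⟩ := h.room s hs t ht E hE
  hf.exists_extension hA hfin hcard

theorem tr_mapF (h : RenamesInto cst cst' M M' N) (hs : s ∈ M.S) (hst : M.Tr s t)
    (hf : IsRenaming cst cst' f (adomF s ∪ adomF t)) (hfs : mapF f s ∈ M'.S) :
    M'.Tr (mapF f s) (mapF f t) := by
  obtain ⟨a, ha⟩ := hst
  obtain ⟨g, hgf, hg⟩ := h.exists_extension hs (M.tau_closed s hs a ha)
    ((encard_actElems_le a).trans (Nat.cast_le.2 h.params)) hf subset_union_left
  rw [← mapF_congr (hgf.mono subset_union_left)] at hfs ⊢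
  rw [← mapF_congr (hgf.mono subset_union_right)]
  exact ⟨a.map g, h.transitions hs ha hg hfs⟩

theorem mapF_s0 (h : RenamesInto cst cst' M M' N) (hcst : ∀ c, f (cst c) = cst' c) :
    mapF f M.s0 = M'.s0 := by
  obtain ⟨ι, hι⟩ := h.init_iso
  obtain ⟨hren, hmap⟩ := isWitness_iff.1 hι
  rw [hmap]
  refine mapF_congr fun u hu => ?_
  obtain ⟨c, rfl⟩ := h.init_subset hu
  rw [hcst, hren.map_cst]

theorem mapF_mem (h : RenamesInto cst cst' M M' N) (hs : s ∈ M.S)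
    (hf : IsRenaming cst cst' f (adomF s)) : mapF f s ∈ M'.S := by
  rw [h.reach] at hs
  induction hs generalizing f with
  | refl => exact h.mapF_s0 hf.map_cst ▸ M'.s0_mem
  | @tail s t hs hst ih =>
    have hsS : s ∈ M.S := h.reach ▸ hs
    obtain ⟨a, ha⟩ := hst
    obtain ⟨g, hgf, hg⟩ := h.exists_extension (E := ∅) hsS (M.tau_closed s hsS a ha) (by simp) hf
      (by simp)
    rw [union_empty] at hg
    have hgs : mapF g s ∈ M'.S := ih (hg.mono subset_union_left)
    obtain ⟨a', ha'⟩ := h.tr_mapF hsS ⟨a, ha⟩ hg hgs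
    exact mapF_congr hgf ▸ M'.tau_closed _ hgs a' ha'

variable {V : Set ℕ}

theorem exists_eqConfig_s0 (h : RenamesInto cst cst' M M' N) (hV : V.encard ≤ N) (σ : ℕ → U) :
    ∃ σ', EqConfig cst cst' M M' V σ σ' M.s0 M'.s0 := by
  obtain ⟨ι, hι⟩ := h.init_iso
  obtain ⟨g, -, hg⟩ := h.exists_extension M.s0_mem M.s0_mem
    ((encard_image_le σ V).trans hV) (isWitness_iff.1 hι).1
    (subset_union_left.trans subset_union_left)
  rw [union_self] at hg
  exact ⟨g ∘ σ, M.s0_mem, M'.s0_mem,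
    eqAssign_iff.2 ⟨g, hg, (h.mapF_s0 hg.map_cst).symm, fun _ _ => rfl⟩⟩

theorem exists_renaming_of_eqConfig (h : RenamesInto cst cst' M M' N) (hV : V.encard ≤ N)
    {σ : ℕ → U} {σ' : ℕ → U'} {s' : GState D n U'}
    (hs : EqConfig cst cst' M M' V σ σ' s s') (ht : t ∈ M.S) :
    ∃ g, IsRenaming cst cst' g (adomF s ∪ adomF t) ∧ s' = mapF g s ∧
      EqConfig cst cst' M M' V σ σ' t (mapF g t) := by
  obtain ⟨γ, hγ, rfl, hσ⟩ := eqAssign_iff.1 hs.eqAssign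
  obtain ⟨g, hgγ, hg⟩ := h.exists_extension hs.mem ht ((encard_image_le σ V).trans hV) hγ
    (union_subset_union_left _ subset_union_left)
  have hgt : IsRenaming cst cst' g (adomF t ∪ σ '' V) :=
    hg.mono (union_subset_union_left _ subset_union_right)
  refine ⟨g, hg.mono subset_union_left, (mapF_congr (hgγ.mono subset_union_left)).symm, ht,
    h.mapF_mem ht (hgt.mono subset_union_left), eqAssign_iff.2 ⟨g, hgt, rfl, fun x hx => ?_⟩⟩
  rw [hσ hx, Function.comp_apply, Function.comp_apply, hgγ (.inr (mem_image_of_mem σ hx))]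

theorem isStepSimulation (h : RenamesInto cst cst' M M' N) (hV : V.encard ≤ N) :
    IsStepSimulation cst cst' M M' V where
  tr σ σ' s s' t hs hst := by
    obtain ⟨a, ha⟩ := hst
    obtain ⟨g, hg, rfl, ht⟩ :=
      h.exists_renaming_of_eqConfig hV hs (M.tau_closed s hs.mem a ha)
    exact ⟨mapF g t, h.tr_mapF hs.mem ⟨a, ha⟩ hg hs.mem', ht⟩
  epi σ σ' i s s' t hs hst := by
    obtain ⟨-, htS, hi⟩ := hst
    obtain ⟨g, -, rfl, ht⟩ := h.exists_renaming_of_eqConfig hV hs htS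
    exact ⟨mapF g t, ⟨hs.mem', ht.mem', congrArg (Inst.map g) hi⟩, ht⟩

theorem satM {φ : FOCTLK D C n} (h : RenamesInto cst cst' M M' N)
    (h' : RenamesInto cst' cst M' M N) (hφ : φ.vars.card ≤ N) (hsat : φ.satM cst M) :
    φ.satM cst' M' := by
  have hV : (φ.vars : Set ℕ).encard ≤ N := by rwa [encard_coe_eq_coe_finsetCard, Nat.cast_le]
  intro σ'
  obtain ⟨σ, hσ⟩ := h'.exists_eqConfig_s0 hV σ'
  exact (h.isStepSimulation hV).sat subset_rfl (h'.isStepSimulation hV) hσ.symm (hsat σ)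

end RenamesInto

theorem statement14_general [Finite C] [Nonempty U]
    (hM : M.S = { s | Relation.ReflTransGen M.Tr M.s0 s })
    (hM' : M'.S = { s | Relation.ReflTransGen M'.Tr M'.s0 s })
    (hu : UniformT cst M) {b : ℕ} (hb : BBounded M b) (φ : FOCTLK D C n)
    (hU : ((2 * b + Nat.card C + max φ.vars.card (NAg sig) : ℕ) : Cardinal) ≤ Cardinal.mk U)
    (hU' : ((2 * b + Nat.card C + max φ.vars.card (NAg sig) : ℕ) : Cardinal) ≤ Cardinal.mk U')
    (habs : IsOAbstraction cst cst' M M') :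
    φ.satM cst M ↔ φ.satM cst' M' := by
  have hiso : Iso cst cst' M.s0 M'.s0 := habs.2.1.1
  have hforth : RenamesInto cst cst' M M' (max φ.vars.card (NAg sig)) :=
    ⟨hM, habs.2.1.2, hiso, habs.transitionsRenameInto, le_max_right _ _, hb.hasRoom cst hU'⟩
  have hback : RenamesInto cst' cst M' M (max φ.vars.card (NAg sig)) :=
    ⟨hM', hiso.adomF_subset_range habs.2.1.2, hiso.symm,
      habs.transitionsRenameInto_symm hu.transitionsRenameInto, le_max_right _ _,
      (habs.bBounded hM' hb).hasRoom cst' hU⟩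
  exact ⟨hforth.satM hback (le_max_left _ _), hback.satM hforth (le_max_left _ _)⟩

end Room

/-! ### STATEMENT 14 -/

theorem statement14
    {D : Schema} {C : Type} [Fintype C] {n : ℕ}
    {sig : Fin (n+1) → AgentSig} {U U' : Type} [Infinite U]
    (cst : C → U) (cst' : C → U')
    (hcst : Function.Injective cst) (hcst' : Function.Injective cst')
    {Ag : ∀ i, Agent D (sig i) U} {Ag' : ∀ i, Agent D (sig i) U'}
    (M : ACMAS D sig Ag) (M' : ACMAS D sig Ag')
    (hM : M.Std) (hM' : M'.Std)
    (hu : Uniform cst M)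
    (b : ℕ) (hb : BBounded M b)
    (h0 : adomF M.s0 ⊆ Set.range cst)
    (φ : FOCTLK D C n)
    (hcard : ((2*b + Nat.card C + max φ.vars.card (NAg sig) : ℕ) : Cardinal) ≤
      Cardinal.mk U')
    (habs : IsOAbstraction cst cst' M M') :
    FOCTLK.satM cst M φ ↔ FOCTLK.satM cst' M' φ :=
  statement14_general hM.2 hM'.2 hu.1 hb φ
    (Cardinal.natCast_le_aleph0.trans (Cardinal.aleph0_le_mk U)) hcard habs
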